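/- The center of the algebra U = U^+_{r,s}(sl_3) is the base field: Z(U) = ℂ·1. -/

import Mathlib

/-!
Put `E₃ = E₁E₂ - s E₂E₁`. The Serre relations say `E₁E₃ = r E₃E₁` and `E₃E₂ = r E₂E₃`, so left
multiplication by `E₁` and `E₂` on the ordered monomials `E₂^a E₃^b E₁^c` is given by explicit
formulas. These formulas define a representation `ρ` of `U` on the vector space `PBW` with basis
`ℕ × ℕ × ℕ`, and the linear map `Φ : PBW → U` sending basis vectors to ordered monomials
intertwines `ρ` with left multiplication (`Phi_rho`). Consequently `z = Φ (ρ z δ)` for all `z`,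
where `δ` is the basis vector of the monomial `1`; the coordinates of `f = ρ z δ` are the
PBW coefficients of `z`.

Right multiplication by `E₁` and `E₃` is given by operators commuting with `ρ`, so for central `z`
the vector `f` satisfies `L₁ f = R₁ f` and `L₃ f = R₃ f`. The second equation reads
`r^a f(a,b,c) = r^c f(a,b,c)`, which forces `a = c`. The first one, at the index `(a,b,a+1)`, reads
`(s^a r^b - 1) f(a,b,a) + [a+1] f(a+1,b-1,a+1) = 0`, the second term being absent for `b = 0`;
induction on `b` gives `f(a,b,a) = 0` whenever `(a,b) ≠ (0,0)`. Hence `f` is a multiple of `δ` and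
`z` is a scalar.
-/

noncomputable section

open FreeAlgebra

/-- The two quantum Serre relations defining `U⁺_{r,s}(sl₃)` as a quotient of the
free algebra on two generators (generator `0` is `E₁`, generator `1` is `E₂`). -/
inductive URel (r s : ℂ) : FreeAlgebra ℂ (Fin 2) → FreeAlgebra ℂ (Fin 2) → Prop
  | serre1 : URel r s
      (ι ℂ (0 : Fin 2) * ι ℂ 0 * ι ℂ 1 - (r + s) • (ι ℂ (0 : Fin 2) * ι ℂ 1 * ι ℂ 0)
        + (r * s) • (ι ℂ (1 : Fin 2) * ι ℂ 0 * ι ℂ 0)) 0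
  | serre2 : URel r s
      (ι ℂ (0 : Fin 2) * ι ℂ 1 * ι ℂ 1 - (r + s) • (ι ℂ (1 : Fin 2) * ι ℂ 0 * ι ℂ 1)
        + (r * s) • (ι ℂ (1 : Fin 2) * ι ℂ 1 * ι ℂ 0)) 0

/-- `U⁺_{r,s}(sl₃)`: quotient of the free algebra by the two-sided ideal generated by
the two quantum Serre relations. -/
abbrev Usl3 (r s : ℂ) := RingQuot (URel r s)

def E₁ (r s : ℂ) : Usl3 r s := RingQuot.mkAlgHom ℂ (URel r s) (ι ℂ 0)

def E₂ (r s : ℂ) : Usl3 r s := RingQuot.mkAlgHom ℂ (URel r s) (ι ℂ 1)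

def E₃ (r s : ℂ) : Usl3 r s := E₁ r s * E₂ r s - s • (E₂ r s * E₁ r s)

/-! ### The representation on ordered monomials -/

/-- The vector space with basis `ℕ × ℕ × ℕ`; the index `(a, b, c)` stands for the ordered monomial
`E₂^a E₃^b E₁^c`. -/
abbrev PBW := (ℕ × ℕ × ℕ) →₀ ℂ

/-- The basis vector of `PBW` standing for `E₂^a E₃^b E₁^c`. -/
def pbw (a b c : ℕ) : PBW := Finsupp.single (a, b, c) 1

/-- The `(r, s)`-integer `[a] = ∑_{i < a} s^i r^(a-1-i)`. -/
def rsInt (r s : ℂ) : ℕ → ℂ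
  | 0 => 0
  | a + 1 => s * rsInt r s a + r ^ a

/-- Left multiplication by `E₁` on ordered monomials. For `a = 0` the truncated subtraction is
harmless because `[0] = 0`. -/
def L1 (r s : ℂ) : PBW →ₗ[ℂ] PBW :=
  Finsupp.linearCombination ℂ fun p =>
    (s ^ p.1 * r ^ p.2.1) • pbw p.1 p.2.1 (p.2.2 + 1)
      + rsInt r s p.1 • pbw (p.1 - 1) (p.2.1 + 1) p.2.2

/-- Left multiplication by `E₂` on ordered monomials. -/
def L2 : PBW →ₗ[ℂ] PBW :=
  Finsupp.linearCombination ℂ fun p => pbw (p.1 + 1) p.2.1 p.2.2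

/-- Left multiplication by `E₃` on ordered monomials. -/
def L3 (r : ℂ) : PBW →ₗ[ℂ] PBW :=
  Finsupp.linearCombination ℂ fun p => r ^ p.1 • pbw p.1 (p.2.1 + 1) p.2.2

/-- Right multiplication by `E₁` on ordered monomials. -/
def R1 : PBW →ₗ[ℂ] PBW :=
  Finsupp.linearCombination ℂ fun p => pbw p.1 p.2.1 (p.2.2 + 1)

/-- Right multiplication by `E₃` on ordered monomials. -/
def R3 (r : ℂ) : PBW →ₗ[ℂ] PBW :=
  Finsupp.linearCombination ℂ fun p => r ^ p.2.2 • pbw p.1 (p.2.1 + 1) p.2.2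

section

variable (r s : ℂ)

lemma L1_zero (b c : ℕ) : L1 r s (pbw 0 b c) = r ^ b • pbw 0 b (c + 1) := by
  simp only [L1, pbw, Finsupp.linearCombination_single, rsInt, pow_zero, one_mul, zero_smul,
    add_zero, one_smul]

lemma L1_succ (a b c : ℕ) : L1 r s (pbw (a + 1) b c) =
    (s ^ (a + 1) * r ^ b) • pbw (a + 1) b (c + 1) + rsInt r s (a + 1) • pbw a (b + 1) c := by
  simp [L1, pbw]

lemma L2_pbw (a b c : ℕ) : L2 (pbw a b c) = pbw (a + 1) b c := by
  simp [L2, pbw]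

lemma L3_pbw (a b c : ℕ) : L3 r (pbw a b c) = r ^ a • pbw a (b + 1) c := by
  simp [L3, pbw]

lemma R1_pbw (a b c : ℕ) : R1 (pbw a b c) = pbw a b (c + 1) := by
  simp [R1, pbw]

lemma R3_pbw (a b c : ℕ) : R3 r (pbw a b c) = r ^ c • pbw a (b + 1) c := by
  simp [R3, pbw]

lemma pbw_hom_ext {M : Type*} [AddCommMonoid M] [Module ℂ M] {f g : PBW →ₗ[ℂ] M}
    (h : ∀ a b c, f (pbw a b c) = g (pbw a b c)) : f = g := by
  apply Finsupp.lhom_ext'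
  rintro ⟨a, b, c⟩
  ext
  simpa [pbw] using h a b c

lemma L3_eq : L1 r s * L2 - s • (L2 * L1 r s) = L3 r := by
  apply pbw_hom_ext
  rintro (_ | a) b c <;>
    simp only [LinearMap.sub_apply, LinearMap.smul_apply, Module.End.mul_apply, L2_pbw, L1_zero,
      L1_succ, L3_pbw, map_add, map_smul, rsInt] <;> module

lemma L1_L3 : L1 r s * L3 r = r • (L3 r * L1 r s) := by
  apply pbw_hom_ext
  rintro (_ | a) b c <;>
    simp only [LinearMap.smul_apply, Module.End.mul_apply, L1_zero,
      L1_succ, L3_pbw, map_add, map_smul] <;> module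

lemma L3_L2 : L3 r * L2 = r • (L2 * L3 r) := by
  apply pbw_hom_ext
  intro a b c
  simp only [LinearMap.smul_apply, Module.End.mul_apply, L2_pbw, L3_pbw, map_smul]
  module

/-- The first Serre relation for any pair `x, y`, with `E₃` spelled out. -/
lemma serre1_expand {A : Type*} [Ring A] [Algebra ℂ A] (x y : A) :
    x * x * y - (r + s) • (x * y * x) + (r * s) • (y * x * x)
      = x * (x * y - s • (y * x)) - r • ((x * y - s • (y * x)) * x) := by
  simp only [mul_sub, sub_mul, mul_smul_comm, smul_mul_assoc, mul_assoc]
  module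

/-- The second Serre relation for any pair `x, y`, with `E₃` spelled out. -/
lemma serre2_expand {A : Type*} [Ring A] [Algebra ℂ A] (x y : A) :
    x * y * y - (r + s) • (y * x * y) + (r * s) • (y * y * x)
      = (x * y - s • (y * x)) * y - r • (y * (x * y - s • (y * x))) := by
  simp only [mul_sub, sub_mul, mul_smul_comm, smul_mul_assoc, mul_assoc]
  module

/-- The representation of `U` on `PBW` through `L1` and `L2`. -/
def rho : Usl3 r s →ₐ[ℂ] Module.End ℂ PBW :=
  RingQuot.liftAlgHom ℂ ⟨FreeAlgebra.lift ℂ ![L1 r s, L2], by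
    intro x y h
    cases h
    · simp only [map_add, map_sub, map_smul, map_mul, FreeAlgebra.lift_ι_apply, map_zero,
        Matrix.cons_val_zero, Matrix.cons_val_one]
      refine (serre1_expand (A := Module.End ℂ PBW) r s (L1 r s) L2).trans ?_
      rw [L3_eq, L1_L3, sub_self]
    · simp only [map_add, map_sub, map_smul, map_mul, FreeAlgebra.lift_ι_apply, map_zero,
        Matrix.cons_val_zero, Matrix.cons_val_one]
      refine (serre2_expand (A := Module.End ℂ PBW) r s (L1 r s) L2).trans ?_
      rw [L3_eq, L3_L2, sub_self]⟩

lemma rho_E₁ : rho r s (E₁ r s) = L1 r s := by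
  simp [rho, E₁]

lemma rho_E₂ : rho r s (E₂ r s) = L2 := by
  simp [rho, E₂]

lemma rho_E₃ : rho r s (E₃ r s) = L3 r := by
  rw [E₃, map_sub, map_smul, map_mul, map_mul, rho_E₁, rho_E₂, L3_eq]

lemma Usl3_induction {P : Usl3 r s → Prop} (h1 : P (E₁ r s)) (h2 : P (E₂ r s))
    (hc : ∀ t : ℂ, P (algebraMap ℂ _ t)) (hm : ∀ x y, P x → P y → P (x * y))
    (ha : ∀ x y, P x → P y → P (x + y)) (z : Usl3 r s) : P z := by
  obtain ⟨x, rfl⟩ := RingQuot.mkAlgHom_surjective ℂ (URel r s) z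
  induction x using FreeAlgebra.induction with
  | grade0 t => simpa using hc t
  | grade1 i => fin_cases i; exacts [h1, h2]
  | mul x y hx hy => rw [map_mul]; exact hm _ _ hx hy
  | add x y hx hy => rw [map_add]; exact ha _ _ hx hy

/-! ### Straightening in the algebra -/

lemma E₁_mul_E₂ : E₁ r s * E₂ r s = s • (E₂ r s * E₁ r s) + E₃ r s := by
  simp [E₃]

lemma E₁_mul_E₃ : E₁ r s * E₃ r s = r • (E₃ r s * E₁ r s) := by
  have h := RingQuot.mkAlgHom_rel ℂ (URel.serre1 (r := r) (s := s))
  simp only [map_add, map_sub, map_smul, map_mul, map_zero] at h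
  rw [serre1_expand] at h
  exact sub_eq_zero.mp h

lemma E₃_mul_E₂ : E₃ r s * E₂ r s = r • (E₂ r s * E₃ r s) := by
  have h := RingQuot.mkAlgHom_rel ℂ (URel.serre2 (r := r) (s := s))
  simp only [map_add, map_sub, map_smul, map_mul, map_zero] at h
  rw [serre2_expand] at h
  exact sub_eq_zero.mp h

lemma mul_pow_of_qcomm {A : Type*} [Ring A] [Algebra ℂ A] {x y : A} (h : x * y = r • (y * x))
    (n : ℕ) : x * y ^ n = r ^ n • (y ^ n * x) := by
  induction n with
  | zero => simp
  | succ n ih =>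
    rw [pow_succ, ← mul_assoc, ih, smul_mul_assoc, mul_assoc, h, mul_smul_comm, smul_smul,
      pow_succ, mul_assoc]

lemma E₁_mul_E₂_pow (a : ℕ) : E₁ r s * E₂ r s ^ (a + 1) =
    s ^ (a + 1) • (E₂ r s ^ (a + 1) * E₁ r s) + rsInt r s (a + 1) • (E₂ r s ^ a * E₃ r s) := by
  induction a with
  | zero => simp [rsInt, E₁_mul_E₂]
  | succ a ih =>
    rw [pow_succ' _ (a + 1), ← mul_assoc, E₁_mul_E₂, add_mul, smul_mul_assoc, mul_assoc, ih,
      mul_pow_of_qcomm r (E₃_mul_E₂ r s), mul_add, mul_smul_comm, mul_smul_comm, ← mul_assoc,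
      ← mul_assoc, ← pow_succ', ← pow_succ', rsInt.eq_2 r s (a + 1)]
    module

/-- The linear map sending each basis vector to its ordered monomial. -/
def Phi : PBW →ₗ[ℂ] Usl3 r s :=
  Finsupp.linearCombination ℂ fun p => E₂ r s ^ p.1 * (E₃ r s ^ p.2.1 * E₁ r s ^ p.2.2)

lemma Phi_pbw (a b c : ℕ) :
    Phi r s (pbw a b c) = E₂ r s ^ a * (E₃ r s ^ b * E₁ r s ^ c) := by
  simp [Phi, pbw]

lemma Phi_L1 (v : PBW) : Phi r s (L1 r s v) = E₁ r s * Phi r s v := by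
  suffices h : Phi r s ∘ₗ L1 r s = LinearMap.mulLeft ℂ (E₁ r s) ∘ₗ Phi r s from
    LinearMap.congr_fun h v
  have key (b c : ℕ) : E₁ r s * (E₃ r s ^ b * E₁ r s ^ c)
      = r ^ b • (E₃ r s ^ b * E₁ r s ^ (c + 1)) := by
    rw [← mul_assoc, mul_pow_of_qcomm r (E₁_mul_E₃ r s), smul_mul_assoc, mul_assoc, ← pow_succ']
  apply pbw_hom_ext
  rintro (_ | a) b c
  · simp only [LinearMap.comp_apply, L1_zero, LinearMap.mulLeft_apply, map_smul, Phi_pbw,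
      pow_zero, one_mul, key]
  · simp only [LinearMap.comp_apply, L1_succ, LinearMap.mulLeft_apply, map_smul, map_add, Phi_pbw]
    rw [← mul_assoc (E₁ r s), E₁_mul_E₂_pow, add_mul, smul_mul_assoc, smul_mul_assoc, mul_assoc,
      key, mul_assoc, ← mul_assoc (E₃ r s), ← pow_succ', mul_smul_comm, smul_smul]

lemma Phi_L2 (v : PBW) : Phi r s (L2 v) = E₂ r s * Phi r s v := by
  suffices h : Phi r s ∘ₗ L2 = LinearMap.mulLeft ℂ (E₂ r s) ∘ₗ Phi r s from
    LinearMap.congr_fun h v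
  apply pbw_hom_ext
  intro a b c
  simp only [LinearMap.comp_apply, L2_pbw, LinearMap.mulLeft_apply, Phi_pbw, pow_succ', mul_assoc]

/-- `Phi` intertwines `rho` with left multiplication. -/
lemma Phi_rho (z : Usl3 r s) : ∀ v, Phi r s (rho r s z v) = z * Phi r s v := by
  induction z using Usl3_induction with
  | h1 => intro v; rw [rho_E₁, Phi_L1]
  | h2 => intro v; rw [rho_E₂, Phi_L2]
  | hc t => intro v; simp [Algebra.smul_def, Module.algebraMap_end_apply]
  | hm x y hx hy => intro v; rw [map_mul, Module.End.mul_apply, hx, hy, mul_assoc]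
  | ha x y hx hy => intro v; rw [map_add, LinearMap.add_apply, map_add, hx, hy, add_mul]

/-! ### Right multiplications and the centre -/

/-- An operator commuting with `L1` and `L2` commutes with the whole image of `rho`. -/
lemma commute_rho {T : Module.End ℂ PBW} (h1 : L1 r s * T = T * L1 r s) (h2 : L2 * T = T * L2)
    (z : Usl3 r s) : Commute (rho r s z) T := by
  induction z using Usl3_induction with
  | h1 => rw [rho_E₁]; exact h1
  | h2 => rw [rho_E₂]; exact h2
  | hc t => rw [AlgHom.commutes]; exact Algebra.commutes t T
  | hm x y hx hy => rw [map_mul]; exact hx.mul_left hy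
  | ha x y hx hy => rw [map_add]; exact hx.add_left hy

lemma commute_rho_R1 (z : Usl3 r s) : Commute (rho r s z) R1 := by
  apply commute_rho
  · apply pbw_hom_ext
    rintro (_ | a) b c <;>
      simp only [Module.End.mul_apply, R1_pbw, L1_zero, L1_succ, map_add, map_smul]
  · apply pbw_hom_ext
    intro a b c
    simp only [Module.End.mul_apply, R1_pbw, L2_pbw]

lemma commute_rho_R3 (z : Usl3 r s) : Commute (rho r s z) (R3 r) := by
  apply commute_rho
  · apply pbw_hom_ext
    rintro (_ | a) b c <;>
      simp only [Module.End.mul_apply, R3_pbw, L1_zero, L1_succ, map_add, map_smul] <;> module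
  · apply pbw_hom_ext
    intro a b c
    simp only [Module.End.mul_apply, R3_pbw, L2_pbw, map_smul]

/-- If `T` is right multiplication by `x`, then for central `z` the coordinate vector of `z` is
sent to the same vector by `T` and by `rho x`. -/
lemma central_coord {T : Module.End ℂ PBW} {x z : Usl3 r s} (hT : Commute (rho r s z) T)
    (hx : rho r s x (pbw 0 0 0) = T (pbw 0 0 0)) (hz : z * x = x * z) :
    rho r s x (rho r s z (pbw 0 0 0)) = T (rho r s z (pbw 0 0 0)) := by
  rw [← Module.End.mul_apply, ← map_mul, ← hz, map_mul, Module.End.mul_apply, hx,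
    ← Module.End.mul_apply, hT.eq, Module.End.mul_apply]

lemma L3_coeff (f : PBW) (a b c : ℕ) : L3 r f (a, b + 1, c) = r ^ a * f (a, b, c) := by
  suffices h : Finsupp.lapply (a, b + 1, c) ∘ₗ L3 r = r ^ a • Finsupp.lapply (a, b, c) from
    LinearMap.congr_fun h f
  apply pbw_hom_ext
  intro a' b' c'
  simp only [LinearMap.comp_apply, L3_pbw, map_smul, LinearMap.smul_apply]
  simp [pbw, Finsupp.single_apply]
  grind

lemma R3_coeff (f : PBW) (a b c : ℕ) : R3 r f (a, b + 1, c) = r ^ c * f (a, b, c) := by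
  suffices h : Finsupp.lapply (a, b + 1, c) ∘ₗ R3 r = r ^ c • Finsupp.lapply (a, b, c) from
    LinearMap.congr_fun h f
  apply pbw_hom_ext
  intro a' b' c'
  simp only [LinearMap.comp_apply, R3_pbw, map_smul, LinearMap.smul_apply]
  simp [pbw, Finsupp.single_apply]
  grind

lemma R1_coeff (f : PBW) (a b c : ℕ) : R1 f (a, b, c + 1) = f (a, b, c) := by
  suffices h : Finsupp.lapply (a, b, c + 1) ∘ₗ R1 = Finsupp.lapply (a, b, c) from
    LinearMap.congr_fun h f
  apply pbw_hom_ext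
  intro a' b' c'
  simp only [LinearMap.comp_apply, R1_pbw]
  simp [pbw, Finsupp.single_apply]

lemma L1_coeff_zero (f : PBW) (a c : ℕ) : L1 r s f (a, 0, c + 1) = s ^ a * f (a, 0, c) := by
  suffices h : Finsupp.lapply (a, 0, c + 1) ∘ₗ L1 r s = s ^ a • Finsupp.lapply (a, 0, c) from
    LinearMap.congr_fun h f
  apply pbw_hom_ext
  rintro (_ | a') b' c' <;>
    simp only [LinearMap.comp_apply, L1_zero, L1_succ, map_add, map_smul,
      LinearMap.smul_apply] <;>
    simp [pbw, Finsupp.single_apply] <;> split_ifs <;>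
    simp_all [eq_comm (a := 0)]

lemma L1_coeff_succ (f : PBW) (a b c : ℕ) : L1 r s f (a, b + 1, c + 1) =
    s ^ a * r ^ (b + 1) * f (a, b + 1, c) + rsInt r s (a + 1) * f (a + 1, b, c + 1) := by
  suffices h : Finsupp.lapply (a, b + 1, c + 1) ∘ₗ L1 r s =
      (s ^ a * r ^ (b + 1)) • Finsupp.lapply (a, b + 1, c)
        + rsInt r s (a + 1) • Finsupp.lapply (a + 1, b, c + 1) from
    LinearMap.congr_fun h f
  apply pbw_hom_ext
  rintro (_ | a') b' c' <;>
    simp only [LinearMap.comp_apply, L1_zero, L1_succ, map_add, map_smul,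
      LinearMap.smul_apply, LinearMap.add_apply] <;>
    simp [pbw, Finsupp.single_apply] <;> split_ifs <;>
    simp_all [eq_comm (a := 0)]

/-- A coordinate vector on which left and right multiplication by `E₁` and `E₃` agree is
supported at the monomial `1`. -/
lemma coord_eq_zero (hind : ∀ m n : ℤ, r ^ m * s ^ n = 1 → m = 0 ∧ n = 0) (hr : r ≠ 0)
    (f : PBW) (h1 : L1 r s f = R1 f) (h3 : L3 r f = R3 r f) (a b c : ℕ)
    (h : (a, b, c) ≠ (0, 0, 0)) : f (a, b, c) = 0 := by
  by_cases hac : a = c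
  · subst hac
    induction b generalizing a with
    | zero =>
      have e := DFunLike.congr_fun h1 (a, 0, a + 1)
      rw [L1_coeff_zero, R1_coeff] at e
      by_contra hne
      have := hind 0 a (by simpa using mul_right_cancel₀ hne (e.trans (one_mul _).symm))
      simp_all
    | succ b ih =>
      have e := DFunLike.congr_fun h1 (a, b + 1, a + 1)
      rw [L1_coeff_succ, R1_coeff, ih (a + 1) (by simp), mul_zero, add_zero] at e
      by_contra hne
      have e' := mul_right_cancel₀ hne (e.trans (one_mul _).symm)
      have := hind ((b + 1 : ℕ) : ℤ) a (by rw [zpow_natCast, zpow_natCast, mul_comm]; exact e')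
      omega
  · have e := DFunLike.congr_fun h3 (a, b + 1, c)
    rw [L3_coeff, R3_coeff] at e
    by_contra hne
    have e' := mul_right_cancel₀ hne e
    have := hind ((a : ℤ) - c) 0 (by
      rw [zpow_sub₀ hr, zpow_natCast, zpow_natCast, e', zpow_zero, mul_one,
        div_self (pow_ne_zero _ hr)])
    omega

end

/-- the center of `U⁺_{r,s}(sl₃)` is the base field `ℂ·1`. -/
theorem stmt15 (r s : ℂ) (hr : r ≠ 0) (hs : s ≠ 0)
    (hind : ∀ m n : ℤ, r ^ m * s ^ n = 1 → m = 0 ∧ n = 0) :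
    Subalgebra.center ℂ (Usl3 r s) = ⊥ := by
  rw [eq_bot_iff]
  intro z hz
  rw [Subalgebra.mem_center_iff] at hz
  set f := rho r s z (pbw 0 0 0) with hf
  have h1 : L1 r s f = R1 f := by
    rw [← rho_E₁]
    refine central_coord r s (commute_rho_R1 r s z) ?_ (hz _).symm
    rw [rho_E₁, L1_zero, R1_pbw, pow_zero, one_smul]
  have h3 : L3 r f = R3 r f := by
    rw [← rho_E₃ r s]
    refine central_coord r s (commute_rho_R3 r s z) ?_ (hz _).symm
    rw [rho_E₃, L3_pbw, R3_pbw]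
  have hf0 : f = f (0, 0, 0) • pbw 0 0 0 := by
    ext ⟨a, b, c⟩
    by_cases h : (a, b, c) = (0, 0, 0)
    · rw [h]; simp [pbw]
    · rw [coord_eq_zero r s hind hr f h1 h3 a b c h]
      simp [pbw, Ne.symm h]
  have hPhi1 : Phi r s (pbw 0 0 0) = 1 := by simp [Phi_pbw]
  have hzf : Phi r s f = z := by rw [hf, Phi_rho, hPhi1, mul_one]
  rw [Algebra.mem_bot]
  refine ⟨f (0, 0, 0), ?_⟩
  rw [← hzf, hf0, map_smul, hPhi1, Algebra.algebraMap_eq_smul_one, ← hf0]
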